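/- Assume six planar bodies move according to the stated two-triangle ansatz with masses 1, 1, 1, m2, m2, m2 and G = 1. Then the six bodies satisfy Newton's equations of the 6-body problem, r⃗̈_i = Σ_{j≠i} m_j (r⃗_j − r⃗_i)/‖r⃗_j − r⃗_i‖³, if and only if the functions r1, θ, r2, β satisfy the system: θ̈ = (m2 B1 − 2 ṙ1 θ̇)/r1, r̈1 = r1 θ̇² − 1/(√3 r1²) + m2 A1, β̈ = (B2 − 2 ṙ2 β̇)/r2, and r̈2 = r2 β̇² + A2 − m2/(√3 r2²). -/

import Mathlib

open Real

noncomputable def vec2 (x y : ℝ) : EuclideanSpace ℝ (Fin 2) :=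
  (WithLp.equiv 2 (Fin 2 → ℝ)).symm ![x, y]

lemma vec2_decomp (x y : ℝ) : vec2 x y = x • vec2 1 0 + y • vec2 0 1 := by
  ext i; fin_cases i <;> simp [vec2]

lemma vec2_inj {x y x' y' : ℝ} (h : vec2 x y = vec2 x' y') : x = x' ∧ y = y' := by
  have h0 := congrArg (fun v : EuclideanSpace ℝ (Fin 2) => v 0) h
  have h1 := congrArg (fun v : EuclideanSpace ℝ (Fin 2) => v 1) h
  simp [vec2] at h0 h1
  exact ⟨h0, h1⟩

lemma vec2_add (x y x' y' : ℝ) : vec2 x y + vec2 x' y' = vec2 (x + x') (y + y') := by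
  ext i; fin_cases i <;> simp [vec2]

lemma vec2_sub (x y x' y' : ℝ) : vec2 x y - vec2 x' y' = vec2 (x - x') (y - y') := by
  ext i; fin_cases i <;> simp [vec2]

lemma vec2_smul (c x y : ℝ) : c • vec2 x y = vec2 (c * x) (c * y) := by
  ext i; fin_cases i <;> simp [vec2]

lemma vec2_norm (x y : ℝ) : ‖vec2 x y‖ = Real.sqrt (x ^ 2 + y ^ 2) := by
  simp [vec2, EuclideanSpace.norm_eq, Fin.sum_univ_two]

lemma vec2_hasDerivAt {f g : ℝ → ℝ} {f' g' t : ℝ} (hf : HasDerivAt f f' t)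
    (hg : HasDerivAt g g' t) : HasDerivAt (fun t => vec2 (f t) (g t)) (vec2 f' g') t := by
  have h := (hf.smul_const (vec2 1 0)).add (hg.smul_const (vec2 0 1))
  rw [vec2_decomp f' g']
  refine h.congr_of_eventuallyEq (Filter.Eventually.of_forall fun s => ?_)
  exact vec2_decomp _ _

/-- The vector with radial component `a` and angular component `b` in the frame at angle `φ`. -/
noncomputable def polarVec (φ a b : ℝ) : EuclideanSpace ℝ (Fin 2) :=
  vec2 (a * Real.cos φ - b * Real.sin φ) (a * Real.sin φ + b * Real.cos φ)

lemma polarVec_add (φ a b a' b' : ℝ) :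
    polarVec φ a b + polarVec φ a' b' = polarVec φ (a + a') (b + b') := by
  simp only [polarVec, vec2_add]; congr 1 <;> ring

lemma polarVec_inj {φ a b a' b' : ℝ} :
    polarVec φ a b = polarVec φ a' b' ↔ a = a' ∧ b = b' := by
  constructor
  · intro h
    obtain ⟨h1, h2⟩ := vec2_inj h
    have hs := Real.sin_sq_add_cos_sq φ
    constructor
    · linear_combination Real.cos φ * h1 + Real.sin φ * h2 - (a - a') * hs
    · linear_combination Real.cos φ * h2 - Real.sin φ * h1 - (b - b') * hs
  · rintro ⟨rfl, rfl⟩; rfl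

lemma accel (r θ : ℝ → ℝ) (c : ℝ) (b : ℝ → EuclideanSpace ℝ (Fin 2))
    (hb : ∀ t, b t = vec2 (r t * Real.cos (θ t + c)) (r t * Real.sin (θ t + c)))
    (hr : Differentiable ℝ r) (hr2 : Differentiable ℝ (deriv r))
    (hθ : Differentiable ℝ θ) (hθ2 : Differentiable ℝ (deriv θ)) (t : ℝ) :
    deriv (deriv b) t = polarVec (θ t + c)
      (deriv (deriv r) t - r t * (deriv θ t) ^ 2)
      (r t * deriv (deriv θ) t + 2 * deriv r t * deriv θ t) := by
  have hC : ∀ t, HasDerivAt (fun t => Real.cos (θ t + c)) (-Real.sin (θ t + c) * deriv θ t) t :=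
    fun t => ((hθ t).hasDerivAt.add_const c).cos
  have hS : ∀ t, HasDerivAt (fun t => Real.sin (θ t + c)) (Real.cos (θ t + c) * deriv θ t) t :=
    fun t => ((hθ t).hasDerivAt.add_const c).sin
  have hR := fun t => (hr t).hasDerivAt
  have hR2 := fun t => (hr2 t).hasDerivAt
  have hT2 := fun t => (hθ2 t).hasDerivAt
  have hbe : b = fun t => vec2 (r t * Real.cos (θ t + c)) (r t * Real.sin (θ t + c)) := funext hb
  have h1 : deriv b = fun t =>
      vec2 (deriv r t * Real.cos (θ t + c) + r t * (-Real.sin (θ t + c) * deriv θ t))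
        (deriv r t * Real.sin (θ t + c) + r t * (Real.cos (θ t + c) * deriv θ t)) := by
    funext s
    rw [hbe]
    exact (vec2_hasDerivAt ((hR s).mul (hC s)) ((hR s).mul (hS s))).deriv
  rw [h1]
  refine (vec2_hasDerivAt (((hR2 t).mul (hC t)).add ((hR t).mul (((hS t).neg).mul (hT2 t))))
    (((hR2 t).mul (hS t)).add ((hR t).mul ((hC t).mul (hT2 t))))).deriv.trans ?_
  simp only [polarVec, Pi.neg_apply, Pi.mul_apply]
  congr 1 <;> ring

lemma pair_force (μ r ρ φ ψ c s d : ℝ) (h : Real.cos (ψ - φ) = c ∧ Real.sin (ψ - φ) = s)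
    (hd : d = Real.sqrt (r ^ 2 - 2 * r * ρ * c + ρ ^ 2)) :
    (μ / ‖vec2 (ρ * Real.cos ψ) (ρ * Real.sin ψ) - vec2 (r * Real.cos φ) (r * Real.sin φ)‖ ^ 3) •
      (vec2 (ρ * Real.cos ψ) (ρ * Real.sin ψ) - vec2 (r * Real.cos φ) (r * Real.sin φ)) =
    polarVec φ (μ * ((ρ * c - r) / d ^ 3)) (μ * (ρ * s / d ^ 3)) := by
  obtain ⟨rfl, rfl⟩ := h
  have hp := Real.sin_sq_add_cos_sq φ
  have hq := Real.sin_sq_add_cos_sq ψ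
  rw [vec2_sub, vec2_norm]
  have e : (ρ * Real.cos ψ - r * Real.cos φ) ^ 2 + (ρ * Real.sin ψ - r * Real.sin φ) ^ 2
      = r ^ 2 - 2 * r * ρ * Real.cos (ψ - φ) + ρ ^ 2 := by
    rw [Real.cos_sub]; linear_combination r ^ 2 * hp + ρ ^ 2 * hq
  rw [e, ← hd, vec2_smul, polarVec, Real.cos_sub, Real.sin_sub]
  congr 1
  · linear_combination -(μ / d ^ 3 * ρ * Real.cos ψ) * hp
  · linear_combination -(μ / d ^ 3 * ρ * Real.sin ψ) * hp

lemma body_force (μ ν r ρ φ ψa ψb ψ1 ψ2 ψ3 c1 s1 c2 s2 c3 s3 d1 d2 d3 : ℝ) (hr : 0 < r)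
    (ha : Real.cos (ψa - φ) = -(1/2) ∧ Real.sin (ψa - φ) = Real.sqrt 3 / 2)
    (hb : Real.cos (ψb - φ) = -(1/2) ∧ Real.sin (ψb - φ) = -(Real.sqrt 3 / 2))
    (h1 : Real.cos (ψ1 - φ) = c1 ∧ Real.sin (ψ1 - φ) = s1)
    (h2 : Real.cos (ψ2 - φ) = c2 ∧ Real.sin (ψ2 - φ) = s2)
    (h3 : Real.cos (ψ3 - φ) = c3 ∧ Real.sin (ψ3 - φ) = s3)
    (hd1 : d1 = Real.sqrt (r ^ 2 - 2 * r * ρ * c1 + ρ ^ 2))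
    (hd2 : d2 = Real.sqrt (r ^ 2 - 2 * r * ρ * c2 + ρ ^ 2))
    (hd3 : d3 = Real.sqrt (r ^ 2 - 2 * r * ρ * c3 + ρ ^ 2))
    (v va vb v1 v2 v3 : EuclideanSpace ℝ (Fin 2))
    (ev : v = vec2 (r * Real.cos φ) (r * Real.sin φ))
    (eva : va = vec2 (r * Real.cos ψa) (r * Real.sin ψa))
    (evb : vb = vec2 (r * Real.cos ψb) (r * Real.sin ψb))
    (ev1 : v1 = vec2 (ρ * Real.cos ψ1) (ρ * Real.sin ψ1))
    (ev2 : v2 = vec2 (ρ * Real.cos ψ2) (ρ * Real.sin ψ2))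
    (ev3 : v3 = vec2 (ρ * Real.cos ψ3) (ρ * Real.sin ψ3)) :
    (μ / ‖va - v‖ ^ 3) • (va - v) + (μ / ‖vb - v‖ ^ 3) • (vb - v)
      + (ν / ‖v1 - v‖ ^ 3) • (v1 - v) + (ν / ‖v2 - v‖ ^ 3) • (v2 - v)
      + (ν / ‖v3 - v‖ ^ 3) • (v3 - v) =
    polarVec φ
      (-(μ / (Real.sqrt 3 * r ^ 2))
        + ν * ((ρ * c1 - r) / d1 ^ 3 + (ρ * c2 - r) / d2 ^ 3 + (ρ * c3 - r) / d3 ^ 3))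
      (ν * (ρ * s1 / d1 ^ 3 + ρ * s2 / d2 ^ 3 + ρ * s3 / d3 ^ 3)) := by
  have h3' : (0 : ℝ) < Real.sqrt 3 := by positivity
  have hsq : Real.sqrt 3 ^ 2 = 3 := Real.sq_sqrt (by norm_num)
  have hd : Real.sqrt 3 * r = Real.sqrt (r ^ 2 - 2 * r * r * (-(1/2)) + r ^ 2) := by
    symm
    rw [Real.sqrt_eq_iff_mul_self_eq (by nlinarith [sq_nonneg r]) (by positivity)]
    linear_combination -r ^ 2 * hsq
  subst ev eva evb ev1 ev2 ev3
  rw [pair_force μ r r φ ψa _ _ _ ha hd, pair_force μ r r φ ψb _ _ _ hb hd,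
    pair_force ν r ρ φ ψ1 _ _ _ h1 hd1, pair_force ν r ρ φ ψ2 _ _ _ h2 hd2,
    pair_force ν r ρ φ ψ3 _ _ _ h3 hd3]
  simp only [polarVec_add]
  have key : (r * (-(1/2)) - r) / (Real.sqrt 3 * r) ^ 3 = -(1 / (2 * (Real.sqrt 3 * r ^ 2))) := by
    have : (Real.sqrt 3 * r) ^ 3 = 3 * (Real.sqrt 3 * r ^ 3) := by
      linear_combination Real.sqrt 3 * r ^ 3 * hsq
    rw [this]
    field_simp
    ring
  rw [key]
  congr 1
  · field_simp
    ring
  · ring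

lemma trig_a (x : ℝ) (k : ℤ) (h : x = 2 * π / 3 + k * (2 * π)) :
    Real.cos x = -(1/2) ∧ Real.sin x = Real.sqrt 3 / 2 := by
  rw [h, Real.cos_add_int_mul_two_pi, Real.sin_add_int_mul_two_pi,
    show 2 * π / 3 = π - π / 3 by ring, Real.cos_pi_sub, Real.sin_pi_sub,
    Real.cos_pi_div_three, Real.sin_pi_div_three]
  exact ⟨rfl, rfl⟩

lemma trig_b (x : ℝ) (k : ℤ) (h : x = -(2 * π / 3) + k * (2 * π)) :
    Real.cos x = -(1/2) ∧ Real.sin x = -(Real.sqrt 3 / 2) := by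
  rw [h, Real.cos_add_int_mul_two_pi, Real.sin_add_int_mul_two_pi, Real.cos_neg, Real.sin_neg,
    show 2 * π / 3 = π - π / 3 by ring, Real.cos_pi_sub, Real.sin_pi_sub,
    Real.cos_pi_div_three, Real.sin_pi_div_three]
  exact ⟨rfl, rfl⟩

lemma trig_1 (x δ : ℝ) (k : ℤ) (h : x = π / 3 - δ + k * (2 * π)) :
    Real.cos x = Real.sin (π/6 + δ) ∧ Real.sin x = Real.cos (π/6 + δ) := by
  rw [h, Real.cos_add_int_mul_two_pi, Real.sin_add_int_mul_two_pi,
    show π / 3 - δ = π / 2 - (π / 6 + δ) by ring, Real.cos_pi_div_two_sub, Real.sin_pi_div_two_sub]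
  exact ⟨rfl, rfl⟩

lemma trig_2 (x δ : ℝ) (k : ℤ) (h : x = π - δ + k * (2 * π)) :
    Real.cos x = -Real.cos δ ∧ Real.sin x = Real.sin δ := by
  rw [h, Real.cos_add_int_mul_two_pi, Real.sin_add_int_mul_two_pi,
    Real.cos_pi_sub, Real.sin_pi_sub]
  exact ⟨rfl, rfl⟩

lemma trig_3 (x δ : ℝ) (k : ℤ) (h : x = -(π / 3) - δ + k * (2 * π)) :
    Real.cos x = Real.sin (π/6 - δ) ∧ Real.sin x = -Real.cos (π/6 - δ) := by
  rw [h, Real.cos_add_int_mul_two_pi, Real.sin_add_int_mul_two_pi,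
    show -(π / 3) - δ = -(π / 2 - (π / 6 - δ)) by ring, Real.cos_neg, Real.sin_neg,
    Real.cos_pi_div_two_sub, Real.sin_pi_div_two_sub]
  exact ⟨rfl, rfl⟩

lemma trig_neg {x c s : ℝ} (h : Real.cos (-x) = c ∧ Real.sin (-x) = s) :
    Real.cos x = c ∧ Real.sin x = -s := by
  rw [Real.cos_neg, Real.sin_neg] at h
  exact ⟨h.1, by linarith [h.2]⟩

/-- Proposition: under the two-triangle 6-body ansatz, Newton's equations of the
6-body problem are equivalent to the reduced system for `r1, θ, r2, β`. -/
theorem six_body_reduced_system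
    (m2 : ℝ) (hm2 : 0 < m2)
    (r1 r2 θ β : ℝ → ℝ)
    (hr1pos : ∀ t, 0 < r1 t) (hr2pos : ∀ t, 0 < r2 t)
    (hr1d : Differentiable ℝ r1) (hr1d2 : Differentiable ℝ (deriv r1))
    (hr2d : Differentiable ℝ r2) (hr2d2 : Differentiable ℝ (deriv r2))
    (hθd : Differentiable ℝ θ) (hθd2 : Differentiable ℝ (deriv θ))
    (hβd : Differentiable ℝ β) (hβd2 : Differentiable ℝ (deriv β))
    (δ d1 d2 d3 A1 B1 A2 B2 : ℝ → ℝ)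
    (hδ : ∀ t, δ t = θ t - β t)
    (hd1 : ∀ t, d1 t =
      Real.sqrt ((r1 t)^2 - 2 * r1 t * r2 t * Real.sin (π/6 + δ t) + (r2 t)^2))
    (hd2 : ∀ t, d2 t =
      Real.sqrt ((r1 t)^2 + 2 * r1 t * r2 t * Real.cos (δ t) + (r2 t)^2))
    (hd3 : ∀ t, d3 t =
      Real.sqrt ((r1 t)^2 - 2 * r1 t * r2 t * Real.sin (π/6 - δ t) + (r2 t)^2))
    (hd1pos : ∀ t, 0 < d1 t) (hd2pos : ∀ t, 0 < d2 t) (hd3pos : ∀ t, 0 < d3 t)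
    (hA1 : ∀ t, A1 t =
      (-(r1 t) + r2 t * Real.sin (π/6 + δ t)) / (d1 t)^3
      + (-(r1 t) - r2 t * Real.cos (δ t)) / (d2 t)^3
      + (-(r1 t) + r2 t * Real.sin (π/6 - δ t)) / (d3 t)^3)
    (hB1 : ∀ t, B1 t =
      r2 t * Real.cos (π/6 + δ t) / (d1 t)^3
      + r2 t * Real.sin (δ t) / (d2 t)^3
      - r2 t * Real.cos (π/6 - δ t) / (d3 t)^3)
    (hA2 : ∀ t, A2 t =
      (r1 t * Real.sin (π/6 + δ t) - r2 t) / (d1 t)^3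
      + (r1 t * Real.sin (π/6 - δ t) - r2 t) / (d3 t)^3
      + (-(r1 t * Real.cos (δ t)) - r2 t) / (d2 t)^3)
    (hB2 : ∀ t, B2 t =
      -(r1 t * Real.cos (π/6 + δ t)) / (d1 t)^3
      + r1 t * Real.cos (π/6 - δ t) / (d3 t)^3
      - r1 t * Real.sin (δ t) / (d2 t)^3)
    (m : Fin 6 → ℝ)
    (hma : m 0 = 1) (hmb : m 1 = 1) (hmc : m 2 = 1)
    (hmd : m 3 = m2) (hme : m 4 = m2) (hmf : m 5 = m2)
    (bodies : Fin 6 → ℝ → EuclideanSpace ℝ (Fin 2))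
    (hb0 : ∀ t, bodies 0 t = vec2 (r1 t * Real.cos (θ t)) (r1 t * Real.sin (θ t)))
    (hb1 : ∀ t, bodies 1 t =
      vec2 (r1 t * Real.cos (θ t + 2*π/3)) (r1 t * Real.sin (θ t + 2*π/3)))
    (hb2 : ∀ t, bodies 2 t =
      vec2 (r1 t * Real.cos (θ t + 4*π/3)) (r1 t * Real.sin (θ t + 4*π/3)))
    (hb3 : ∀ t, bodies 3 t =
      vec2 (r2 t * Real.cos (β t + π/3)) (r2 t * Real.sin (β t + π/3)))
    (hb4 : ∀ t, bodies 4 t =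
      vec2 (r2 t * Real.cos (β t + π/3 + 2*π/3)) (r2 t * Real.sin (β t + π/3 + 2*π/3)))
    (hb5 : ∀ t, bodies 5 t =
      vec2 (r2 t * Real.cos (β t + π/3 + 4*π/3)) (r2 t * Real.sin (β t + π/3 + 4*π/3))) :
    (∀ (i : Fin 6) (t : ℝ),
        deriv (deriv (bodies i)) t =
          ∑ j ∈ Finset.univ.erase i,
            (m j / ‖bodies j t - bodies i t‖ ^ 3) • (bodies j t - bodies i t))
    ↔
    (∀ t : ℝ,
      deriv (deriv θ) t = (m2 * B1 t - 2 * deriv r1 t * deriv θ t) / r1 t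
      ∧ deriv (deriv r1) t =
          r1 t * (deriv θ t)^2 - 1 / (Real.sqrt 3 * (r1 t)^2) + m2 * A1 t
      ∧ deriv (deriv β) t = (B2 t - 2 * deriv r2 t * deriv β t) / r2 t
      ∧ deriv (deriv r2) t =
          r2 t * (deriv β t)^2 + A2 t - m2 / (Real.sqrt 3 * (r2 t)^2)) := by
  have hb0' : ∀ t, bodies 0 t =
      vec2 (r1 t * Real.cos (θ t + 0)) (r1 t * Real.sin (θ t + 0)) := by simpa using hb0
  have hb4' : ∀ t, bodies 4 t =
      vec2 (r2 t * Real.cos (β t + (π/3 + 2*π/3))) (r2 t * Real.sin (β t + (π/3 + 2*π/3))) := by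
    simpa only [add_assoc] using hb4
  have hb5' : ∀ t, bodies 5 t =
      vec2 (r2 t * Real.cos (β t + (π/3 + 4*π/3))) (r2 t * Real.sin (β t + (π/3 + 4*π/3))) := by
    simpa only [add_assoc] using hb5
  have e1 : ∀ t, d1 t =
      Real.sqrt ((r1 t)^2 - 2 * r1 t * r2 t * Real.sin (π/6 + δ t) + (r2 t)^2) := hd1
  have e2 : ∀ t, d2 t =
      Real.sqrt ((r1 t)^2 - 2 * r1 t * r2 t * (-Real.cos (δ t)) + (r2 t)^2) := by
    intro t; rw [hd2]; congr 1; ring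
  have e3 := hd3
  have f1 : ∀ t, d1 t =
      Real.sqrt ((r2 t)^2 - 2 * r2 t * r1 t * Real.sin (π/6 + δ t) + (r1 t)^2) := by
    intro t; rw [hd1]; congr 1; ring
  have f2 : ∀ t, d2 t =
      Real.sqrt ((r2 t)^2 - 2 * r2 t * r1 t * (-Real.cos (δ t)) + (r1 t)^2) := by
    intro t; rw [hd2]; congr 1; ring
  have f3 : ∀ t, d3 t =
      Real.sqrt ((r2 t)^2 - 2 * r2 t * r1 t * Real.sin (π/6 - δ t) + (r1 t)^2) := by
    intro t; rw [hd3]; congr 1; ring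
  -- the reduced equations of the two groups
  have hG1 : ∀ t, (deriv (deriv r1) t - r1 t * (deriv θ t) ^ 2 =
        -(1 / (Real.sqrt 3 * (r1 t) ^ 2))
        + m2 * ((r2 t * Real.sin (π/6 + δ t) - r1 t) / (d1 t) ^ 3
          + (r2 t * (-Real.cos (δ t)) - r1 t) / (d2 t) ^ 3
          + (r2 t * Real.sin (π/6 - δ t) - r1 t) / (d3 t) ^ 3) ∧
      r1 t * deriv (deriv θ) t + 2 * deriv r1 t * deriv θ t =
        m2 * (r2 t * Real.cos (π/6 + δ t) / (d1 t) ^ 3 + r2 t * Real.sin (δ t) / (d2 t) ^ 3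
          + r2 t * (-Real.cos (π/6 - δ t)) / (d3 t) ^ 3)) ↔
      (deriv (deriv θ) t = (m2 * B1 t - 2 * deriv r1 t * deriv θ t) / r1 t
      ∧ deriv (deriv r1) t =
          r1 t * (deriv θ t)^2 - 1 / (Real.sqrt 3 * (r1 t)^2) + m2 * A1 t) := by
    intro t
    rw [eq_div_iff (hr1pos t).ne', hA1, hB1]
    constructor
    · rintro ⟨h, h'⟩
      exact ⟨by linear_combination h', by linear_combination h⟩
    · rintro ⟨h', h⟩
      exact ⟨by linear_combination h, by linear_combination h'⟩
  have hG2 : ∀ t, (deriv (deriv r2) t - r2 t * (deriv β t) ^ 2 =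
        -(m2 / (Real.sqrt 3 * (r2 t) ^ 2))
        + 1 * ((r1 t * Real.sin (π/6 + δ t) - r2 t) / (d1 t) ^ 3
          + (r1 t * (-Real.cos (δ t)) - r2 t) / (d2 t) ^ 3
          + (r1 t * Real.sin (π/6 - δ t) - r2 t) / (d3 t) ^ 3) ∧
      r2 t * deriv (deriv β) t + 2 * deriv r2 t * deriv β t =
        1 * (r1 t * (-Real.cos (π/6 + δ t)) / (d1 t) ^ 3 + r1 t * (-Real.sin (δ t)) / (d2 t) ^ 3
          + r1 t * (- -Real.cos (π/6 - δ t)) / (d3 t) ^ 3)) ↔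
      (deriv (deriv β) t = (B2 t - 2 * deriv r2 t * deriv β t) / r2 t
      ∧ deriv (deriv r2) t =
          r2 t * (deriv β t)^2 + A2 t - m2 / (Real.sqrt 3 * (r2 t)^2)) := by
    intro t
    rw [eq_div_iff (hr2pos t).ne', hA2, hB2]
    constructor
    · rintro ⟨h, h'⟩
      exact ⟨by linear_combination h', by linear_combination h⟩
    · rintro ⟨h', h⟩
      exact ⟨by linear_combination h, by linear_combination h'⟩
  have hF0 : ∀ t, (deriv (deriv (bodies 0)) t =
          ∑ j ∈ Finset.univ.erase 0,
            (m j / ‖bodies j t - bodies 0 t‖ ^ 3) • (bodies j t - bodies 0 t)) ↔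
      (deriv (deriv θ) t = (m2 * B1 t - 2 * deriv r1 t * deriv θ t) / r1 t
      ∧ deriv (deriv r1) t =
          r1 t * (deriv θ t)^2 - 1 / (Real.sqrt 3 * (r1 t)^2) + m2 * A1 t) := by
    intro t
    have hs : (Finset.univ.erase 0 : Finset (Fin 6)) = {1, 2, 3, 4, 5} := by decide
    have hf := body_force 1 m2 (r1 t) (r2 t) (θ t + (0)) (θ t + (2*π/3)) (θ t + (4*π/3))
      (β t + (π/3)) (β t + (π/3 + 2*π/3)) (β t + (π/3 + 4*π/3)) _ _ _ _ _ _ (d1 t) (d2 t) (d3 t) (hr1pos t)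
      (trig_a _ (0) (by push_cast; ring)) (trig_b _ (1) (by push_cast; ring))
      (trig_1 _ (δ t) (0) (by push_cast; rw [hδ t]; ring))
      (trig_2 _ (δ t) (0) (by push_cast; rw [hδ t]; ring))
      (trig_3 _ (δ t) (1) (by push_cast; rw [hδ t]; ring))
      (e1 t) (e2 t) (e3 t) _ _ _ _ _ _
      (hb0' t) (hb1 t) (hb2 t) (hb3 t) (hb4' t) (hb5' t)
    rw [hs, Finset.sum_insert (by decide), Finset.sum_insert (by decide),
      Finset.sum_insert (by decide), Finset.sum_insert (by decide), Finset.sum_singleton,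
      hmb, hmc, hmd, hme, hmf]
    simp only [← add_assoc]
    rw [hf, accel r1 θ _ (bodies 0) hb0' hr1d hr1d2 hθd hθd2 t, polarVec_inj]
    exact hG1 t
  have hF1 : ∀ t, (deriv (deriv (bodies 1)) t =
          ∑ j ∈ Finset.univ.erase 1,
            (m j / ‖bodies j t - bodies 1 t‖ ^ 3) • (bodies j t - bodies 1 t)) ↔
      (deriv (deriv θ) t = (m2 * B1 t - 2 * deriv r1 t * deriv θ t) / r1 t
      ∧ deriv (deriv r1) t =
          r1 t * (deriv θ t)^2 - 1 / (Real.sqrt 3 * (r1 t)^2) + m2 * A1 t) := by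
    intro t
    have hs : (Finset.univ.erase 1 : Finset (Fin 6)) = {2, 0, 4, 5, 3} := by decide
    have hf := body_force 1 m2 (r1 t) (r2 t) (θ t + (2*π/3)) (θ t + (4*π/3)) (θ t + (0))
      (β t + (π/3 + 2*π/3)) (β t + (π/3 + 4*π/3)) (β t + (π/3)) _ _ _ _ _ _ (d1 t) (d2 t) (d3 t) (hr1pos t)
      (trig_a _ (0) (by push_cast; ring)) (trig_b _ (0) (by push_cast; ring))
      (trig_1 _ (δ t) (0) (by push_cast; rw [hδ t]; ring))
      (trig_2 _ (δ t) (0) (by push_cast; rw [hδ t]; ring))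
      (trig_3 _ (δ t) (0) (by push_cast; rw [hδ t]; ring))
      (e1 t) (e2 t) (e3 t) _ _ _ _ _ _
      (hb1 t) (hb2 t) (hb0' t) (hb4' t) (hb5' t) (hb3 t)
    rw [hs, Finset.sum_insert (by decide), Finset.sum_insert (by decide),
      Finset.sum_insert (by decide), Finset.sum_insert (by decide), Finset.sum_singleton,
      hmc, hma, hme, hmf, hmd]
    simp only [← add_assoc]
    rw [hf, accel r1 θ _ (bodies 1) hb1 hr1d hr1d2 hθd hθd2 t, polarVec_inj]
    exact hG1 t
  have hF2 : ∀ t, (deriv (deriv (bodies 2)) t =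
          ∑ j ∈ Finset.univ.erase 2,
            (m j / ‖bodies j t - bodies 2 t‖ ^ 3) • (bodies j t - bodies 2 t)) ↔
      (deriv (deriv θ) t = (m2 * B1 t - 2 * deriv r1 t * deriv θ t) / r1 t
      ∧ deriv (deriv r1) t =
          r1 t * (deriv θ t)^2 - 1 / (Real.sqrt 3 * (r1 t)^2) + m2 * A1 t) := by
    intro t
    have hs : (Finset.univ.erase 2 : Finset (Fin 6)) = {0, 1, 5, 3, 4} := by decide
    have hf := body_force 1 m2 (r1 t) (r2 t) (θ t + (4*π/3)) (θ t + (0)) (θ t + (2*π/3))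
      (β t + (π/3 + 4*π/3)) (β t + (π/3)) (β t + (π/3 + 2*π/3)) _ _ _ _ _ _ (d1 t) (d2 t) (d3 t) (hr1pos t)
      (trig_a _ (-1) (by push_cast; ring)) (trig_b _ (0) (by push_cast; ring))
      (trig_1 _ (δ t) (0) (by push_cast; rw [hδ t]; ring))
      (trig_2 _ (δ t) (-1) (by push_cast; rw [hδ t]; ring))
      (trig_3 _ (δ t) (0) (by push_cast; rw [hδ t]; ring))
      (e1 t) (e2 t) (e3 t) _ _ _ _ _ _
      (hb2 t) (hb0' t) (hb1 t) (hb5' t) (hb3 t) (hb4' t)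
    rw [hs, Finset.sum_insert (by decide), Finset.sum_insert (by decide),
      Finset.sum_insert (by decide), Finset.sum_insert (by decide), Finset.sum_singleton,
      hma, hmb, hmf, hmd, hme]
    simp only [← add_assoc]
    rw [hf, accel r1 θ _ (bodies 2) hb2 hr1d hr1d2 hθd hθd2 t, polarVec_inj]
    exact hG1 t
  have hF3 : ∀ t, (deriv (deriv (bodies 3)) t =
          ∑ j ∈ Finset.univ.erase 3,
            (m j / ‖bodies j t - bodies 3 t‖ ^ 3) • (bodies j t - bodies 3 t)) ↔
      (deriv (deriv β) t = (B2 t - 2 * deriv r2 t * deriv β t) / r2 t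
      ∧ deriv (deriv r2) t =
          r2 t * (deriv β t)^2 + A2 t - m2 / (Real.sqrt 3 * (r2 t)^2)) := by
    intro t
    have hs : (Finset.univ.erase 3 : Finset (Fin 6)) = {4, 5, 0, 2, 1} := by decide
    have hf := body_force m2 1 (r2 t) (r1 t) (β t + (π/3)) (β t + (π/3 + 2*π/3)) (β t + (π/3 + 4*π/3))
      (θ t + (0)) (θ t + (4*π/3)) (θ t + (2*π/3)) _ _ _ _ _ _ (d1 t) (d2 t) (d3 t) (hr2pos t)
      (trig_a _ (0) (by push_cast; ring)) (trig_b _ (1) (by push_cast; ring))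
      (trig_neg (trig_1 _ (δ t) (0) (by push_cast; rw [hδ t]; ring)))
      (trig_neg (trig_2 _ (δ t) (-1) (by push_cast; rw [hδ t]; ring)))
      (trig_neg (trig_3 _ (δ t) (0) (by push_cast; rw [hδ t]; ring)))
      (f1 t) (f2 t) (f3 t) _ _ _ _ _ _
      (hb3 t) (hb4' t) (hb5' t) (hb0' t) (hb2 t) (hb1 t)
    rw [hs, Finset.sum_insert (by decide), Finset.sum_insert (by decide),
      Finset.sum_insert (by decide), Finset.sum_insert (by decide), Finset.sum_singleton,
      hme, hmf, hma, hmc, hmb]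
    simp only [← add_assoc]
    rw [hf, accel r2 β _ (bodies 3) hb3 hr2d hr2d2 hβd hβd2 t, polarVec_inj]
    exact hG2 t
  have hF4 : ∀ t, (deriv (deriv (bodies 4)) t =
          ∑ j ∈ Finset.univ.erase 4,
            (m j / ‖bodies j t - bodies 4 t‖ ^ 3) • (bodies j t - bodies 4 t)) ↔
      (deriv (deriv β) t = (B2 t - 2 * deriv r2 t * deriv β t) / r2 t
      ∧ deriv (deriv r2) t =
          r2 t * (deriv β t)^2 + A2 t - m2 / (Real.sqrt 3 * (r2 t)^2)) := by
    intro t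
    have hs : (Finset.univ.erase 4 : Finset (Fin 6)) = {5, 3, 1, 0, 2} := by decide
    have hf := body_force m2 1 (r2 t) (r1 t) (β t + (π/3 + 2*π/3)) (β t + (π/3 + 4*π/3)) (β t + (π/3))
      (θ t + (2*π/3)) (θ t + (0)) (θ t + (4*π/3)) _ _ _ _ _ _ (d1 t) (d2 t) (d3 t) (hr2pos t)
      (trig_a _ (0) (by push_cast; ring)) (trig_b _ (0) (by push_cast; ring))
      (trig_neg (trig_1 _ (δ t) (0) (by push_cast; rw [hδ t]; ring)))
      (trig_neg (trig_2 _ (δ t) (0) (by push_cast; rw [hδ t]; ring)))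
      (trig_neg (trig_3 _ (δ t) (0) (by push_cast; rw [hδ t]; ring)))
      (f1 t) (f2 t) (f3 t) _ _ _ _ _ _
      (hb4' t) (hb5' t) (hb3 t) (hb1 t) (hb0' t) (hb2 t)
    rw [hs, Finset.sum_insert (by decide), Finset.sum_insert (by decide),
      Finset.sum_insert (by decide), Finset.sum_insert (by decide), Finset.sum_singleton,
      hmf, hmd, hmb, hma, hmc]
    simp only [← add_assoc]
    rw [hf, accel r2 β _ (bodies 4) hb4' hr2d hr2d2 hβd hβd2 t, polarVec_inj]
    exact hG2 t
  have hF5 : ∀ t, (deriv (deriv (bodies 5)) t =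
          ∑ j ∈ Finset.univ.erase 5,
            (m j / ‖bodies j t - bodies 5 t‖ ^ 3) • (bodies j t - bodies 5 t)) ↔
      (deriv (deriv β) t = (B2 t - 2 * deriv r2 t * deriv β t) / r2 t
      ∧ deriv (deriv r2) t =
          r2 t * (deriv β t)^2 + A2 t - m2 / (Real.sqrt 3 * (r2 t)^2)) := by
    intro t
    have hs : (Finset.univ.erase 5 : Finset (Fin 6)) = {3, 4, 2, 1, 0} := by decide
    have hf := body_force m2 1 (r2 t) (r1 t) (β t + (π/3 + 4*π/3)) (β t + (π/3)) (β t + (π/3 + 2*π/3))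
      (θ t + (4*π/3)) (θ t + (2*π/3)) (θ t + (0)) _ _ _ _ _ _ (d1 t) (d2 t) (d3 t) (hr2pos t)
      (trig_a _ (-1) (by push_cast; ring)) (trig_b _ (0) (by push_cast; ring))
      (trig_neg (trig_1 _ (δ t) (0) (by push_cast; rw [hδ t]; ring)))
      (trig_neg (trig_2 _ (δ t) (0) (by push_cast; rw [hδ t]; ring)))
      (trig_neg (trig_3 _ (δ t) (1) (by push_cast; rw [hδ t]; ring)))
      (f1 t) (f2 t) (f3 t) _ _ _ _ _ _
      (hb5' t) (hb3 t) (hb4' t) (hb2 t) (hb1 t) (hb0' t)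
    rw [hs, Finset.sum_insert (by decide), Finset.sum_insert (by decide),
      Finset.sum_insert (by decide), Finset.sum_insert (by decide), Finset.sum_singleton,
      hmd, hme, hmc, hmb, hma]
    simp only [← add_assoc]
    rw [hf, accel r2 β _ (bodies 5) hb5' hr2d hr2d2 hβd hβd2 t, polarVec_inj]
    exact hG2 t
  constructor
  · intro h t
    have h1 := (hF0 t).1 (h 0 t)
    have h2 := (hF3 t).1 (h 3 t)
    exact ⟨h1.1, h1.2, h2.1, h2.2⟩
  · intro h i t
    obtain ⟨a, b, c, d⟩ := h t
    fin_cases i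
    · exact (hF0 t).2 ⟨a, b⟩
    · exact (hF1 t).2 ⟨a, b⟩
    · exact (hF2 t).2 ⟨a, b⟩
    · exact (hF3 t).2 ⟨c, d⟩
    · exact (hF4 t).2 ⟨c, d⟩
    · exact (hF5 t).2 ⟨c, d⟩
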